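/- For all signs s₁, s₂, s₃ ∈ {+1, −1} and k = 1, 3, the model triple-point integrals satisfy I_X^{X′ₖ, s₁, s₂, s₃} = −I_X^{X′ₖ, s₁, −s₂, −s₃} = I_X^{X′ₖ, −s₁, −s₂, −s₃}. -/

import Mathlib

open MeasureTheory Filter Topology Set

noncomputable section

abbrev E2 : Type := EuclideanSpace ℝ (Fin 2)
abbrev E3 : Type := EuclideanSpace ℝ (Fin 3)
abbrev E4 : Type := EuclideanSpace ℝ (Fin 4)
abbrev E6 : Type := EuclideanSpace ℝ (Fin 6)

/-- The point of `ℝ³` with the given coordinates. -/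
def mk3 (x y z : ℝ) : E3 := (WithLp.equiv 2 (Fin 3 → ℝ)).symm ![x, y, z]

/-- The north pole `N = (0,0,1)` of `S² ⊆ ℝ³`. -/
def NP : E3 := mk3 0 0 1

/-- Projection of `ℝ³` onto the plane `N^⊥` (the first two coordinates). -/
def pr12 (v : E3) : ℝ × ℝ := (v 0, v 1)

/-- The `N`-coordinate. -/
def pr3 (v : E3) : ℝ := v 2

/-- `unitv v = v / ‖v‖`. -/
def unitv (v : E3) : E3 := ‖v‖⁻¹ • v

/-- Determinant of the projections to `N^⊥` of two vectors (first vector, then second). -/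
def cross2 (a b : E3) : ℝ := a 0 * b 1 - a 1 * b 0

/-- 3×3 determinant (scalar triple product); for `p ∈ S²` and `v, w` tangent to `S²` at
`p`, this is the value of the standard area form of `S²` at `p` on `(v, w)`. -/
def det3 (p v w : E3) : ℝ :=
  p 0 * (v 1 * w 2 - v 2 * w 1) - p 1 * (v 0 * w 2 - v 2 * w 0) +
    p 2 * (v 0 * w 1 - v 1 * w 0)

/-! ### Long knots and 3-component long links -/

/-- A long knot: a smooth embedding `ℝ ↪ ℝ³` which is standard outside `[-1,1]`. -/
def IsLongKnot (f : ℝ → E3) : Prop :=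
  ContDiff ℝ (⊤ : ℕ∞) f ∧ Function.Injective f ∧ (∀ t, deriv f t ≠ 0) ∧
    ∀ x : ℝ, 1 ≤ |x| → f x = mk3 x 0 0

/-- Smooth isotopy of long knots. -/
def KnotIsotopic (f₀ f₁ : ℝ → E3) : Prop :=
  ∃ H : ℝ → ℝ → E3,
    ContDiff ℝ (⊤ : ℕ∞) (fun p : ℝ × ℝ => H p.1 p.2) ∧
    (∀ s, IsLongKnot (H s)) ∧ H 0 = f₀ ∧ H 1 = f₁

/-- A 3-component long link: a smooth embedding `ℝ ⊔ ℝ ⊔ ℝ ↪ ℝ³`, standard outside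
`[-1,1]`, component `k` (for `k = 1,2,3`, i.e. index `i = k - 1 : Fin 3`) having ends
`x ↦ (x, (2 - k)|x|, 0)`. -/
def IsLongLink3 (f : Fin 3 → ℝ → E3) : Prop :=
  (∀ i, ContDiff ℝ (⊤ : ℕ∞) (f i)) ∧
  (∀ i j s t, f i s = f j t → i = j ∧ s = t) ∧
  (∀ i t, deriv (f i) t ≠ 0) ∧
  ∀ i (x : ℝ), 1 ≤ |x| → f i x = mk3 x ((1 - ((i : ℕ) : ℝ)) * |x|) 0

/-- Smooth isotopy of 3-component long links. -/
def LinkIsotopic (f₀ f₁ : Fin 3 → ℝ → E3) : Prop :=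
  ∃ H : ℝ → Fin 3 → ℝ → E3,
    (∀ i, ContDiff ℝ (⊤ : ℕ∞) (fun p : ℝ × ℝ => H p.1 i p.2)) ∧
    (∀ s, IsLongLink3 (H s)) ∧ H 0 = f₀ ∧ H 1 = f₁

/-! ### Diagrams, crossings and Gauss diagram pairings -/

/-- All self-intersections of the projection of the long knot `f` are transverse
(any two branches meeting at a multiple point have independent projected tangents). -/
def TransverseK (f : ℝ → E3) : Prop :=
  ∀ t u, t ≠ u → pr12 (f t) = pr12 (f u) → cross2 (deriv f t) (deriv f u) ≠ 0

/-- The diagram of `f` has only transverse double points. -/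
def OnlyDoubleK (f : ℝ → E3) : Prop :=
  TransverseK f ∧
  ∀ t u v : ℝ, t ≠ u → u ≠ v → t ≠ v →
    pr12 (f t) = pr12 (f u) → pr12 (f u) = pr12 (f v) → False

/-- All self-intersections of the projection of the long link `f` are transverse. -/
def TransverseL (f : Fin 3 → ℝ → E3) : Prop :=
  ∀ i j s t, (i, s) ≠ (j, t) → pr12 (f i s) = pr12 (f j t) →
    cross2 (deriv (f i) s) (deriv (f j) t) ≠ 0

/-- The diagram of the long link `f` has only transverse double points. -/
def OnlyDoubleL (f : Fin 3 → ℝ → E3) : Prop :=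
  TransverseL f ∧
  ∀ i j k s t u, (i, s) ≠ (j, t) → (j, t) ≠ (k, u) → (i, s) ≠ (k, u) →
    pr12 (f i s) = pr12 (f j t) → pr12 (f j t) = pr12 (f k u) → False

/-- Crossings of a long knot diagram: pairs `(t, u)` with `t` on the lower and `u` on the
upper strand; the corresponding chord of the Gauss diagram is directed from `t` to `u`. -/
def CrossingK (f : ℝ → E3) : Set (ℝ × ℝ) :=
  {p | p.1 ≠ p.2 ∧ pr12 (f p.1) = pr12 (f p.2) ∧ pr3 (f p.1) < pr3 (f p.2)}

/-- The sign of the crossing `p = (t, u)` (`+1` iff the projected tangent of the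
over-strand followed by that of the under-strand is a positive basis of `N^⊥`). -/
def csignK (f : ℝ → E3) (p : ℝ × ℝ) : ℝ :=
  Real.sign (cross2 (deriv f p.2) (deriv f p.1))

/-- Gauss diagram pairing for a long knot: the sum, over all pairs of chords of the Gauss
diagram of `f` in the relative position prescribed by `R`, of the products of signs. -/
def pairK (f : ℝ → E3) (R : ℝ × ℝ → ℝ × ℝ → Prop) : ℝ :=
  ∑ᶠ q ∈ {q : (ℝ × ℝ) × (ℝ × ℝ) | q.1 ∈ CrossingK f ∧ q.2 ∈ CrossingK f ∧ R q.1 q.2},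
    csignK f q.1 * csignK f q.2

/-- `⟨X, G_D⟩` : chords `x₁ → x₃` and `x₄ → x₂` with `x₁ < x₂ < x₃ < x₄`. -/
def pairXK (f : ℝ → E3) : ℝ :=
  pairK f fun p q => p.1 < q.2 ∧ q.2 < p.2 ∧ p.2 < q.1

/-- `⟨X′₁, G_D⟩` : chords `a → b` and `c → a` with `a < b < c`. -/
def pairX1K (f : ℝ → E3) : ℝ :=
  pairK f fun p q => q.2 = p.1 ∧ p.1 < p.2 ∧ p.2 < q.1

/-- `⟨X′₂, G_D⟩` : chords `a → b` and `c → b` with `a < b < c`. -/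
def pairX2K (f : ℝ → E3) : ℝ :=
  pairK f fun p q => q.2 = p.2 ∧ p.1 < p.2 ∧ p.2 < q.1

/-- `⟨X′₃, G_D⟩` : chords `a → c` and `c → b` with `a < b < c`. -/
def pairX3K (f : ℝ → E3) : ℝ :=
  pairK f fun p q => p.2 = q.1 ∧ p.1 < q.2 ∧ q.2 < p.2

/-- Crossings of a 3-strand diagram between strand `i` (under) and strand `j` (over);
the corresponding chord is directed from `p.1` on strand `i` to `p.2` on strand `j`. -/
def CrossingL (f : Fin 3 → ℝ → E3) (i j : Fin 3) : Set (ℝ × ℝ) :=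
  {p | pr12 (f i p.1) = pr12 (f j p.2) ∧ pr3 (f i p.1) < pr3 (f j p.2)}

/-- The sign of the crossing `p` between strand `i` (under) and strand `j` (over). -/
def csignL (f : Fin 3 → ℝ → E3) (i j : Fin 3) (p : ℝ × ℝ) : ℝ :=
  Real.sign (cross2 (deriv (f j) p.2) (deriv (f i) p.1))

/-- Gauss diagram pairing for a 3-component long link. -/
def pairL (f : Fin 3 → ℝ → E3) (i₁ j₁ i₂ j₂ : Fin 3) (R : ℝ × ℝ → ℝ × ℝ → Prop) : ℝ :=
  ∑ᶠ q ∈ {q : (ℝ × ℝ) × (ℝ × ℝ) |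
      q.1 ∈ CrossingL f i₁ j₁ ∧ q.2 ∈ CrossingL f i₂ j₂ ∧ R q.1 q.2},
    csignL f i₁ j₁ q.1 * csignL f i₂ j₂ q.2

/-- `⟨𝒳₁, G_D⟩` : a chord from `t` on strand 1 to strand 2, and a chord from strand 3 to
`t′` on strand 1, with `t < t′`. -/
def pairL1 (f : Fin 3 → ℝ → E3) : ℝ := pairL f 0 1 2 0 fun p q => p.1 < q.2

/-- `⟨𝒳₂, G_D⟩` : a chord from strand 1 to `u` on strand 2, and a chord from strand 3 to
`u′` on strand 2, with `u < u′`. -/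
def pairL2 (f : Fin 3 → ℝ → E3) : ℝ := pairL f 0 1 2 1 fun p q => p.2 < q.2

/-- `⟨𝒳₃, G_D⟩` : a chord from strand 1 to `v` on strand 3, and a chord from `v′` on
strand 3 to strand 2, with `v < v′`. -/
def pairL3 (f : Fin 3 → ℝ → E3) : ℝ := pairL f 0 2 2 1 fun p q => p.2 < q.1

/-- `⟨𝒳′₁, G_D⟩` : as `𝒳₁` but with `t = t′` (a triple point). -/
def pairL1' (f : Fin 3 → ℝ → E3) : ℝ := pairL f 0 1 2 0 fun p q => p.1 = q.2

/-- `⟨𝒳′₂, G_D⟩` : as `𝒳₂` but with `u = u′` (a triple point). -/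
def pairL2' (f : Fin 3 → ℝ → E3) : ℝ := pairL f 0 1 2 1 fun p q => p.2 = q.2

/-- `⟨𝒳′₃, G_D⟩` : as `𝒳₃` but with `v = v′` (a triple point). -/
def pairL3' (f : Fin 3 → ℝ → E3) : ℝ := pairL f 0 2 2 1 fun p q => p.2 = q.1

/-! ### The localized unit 2-form `η` on `S²` -/

/-- The action of a 2×2 matrix on `ℝ³ = ℝ² × ℝ`, acting on the first two coordinates. -/
def act2 (A : Matrix (Fin 2) (Fin 2) ℝ) (v : E3) : E3 :=
  mk3 (A 0 0 * v 0 + A 0 1 * v 1) (A 1 0 * v 0 + A 1 1 * v 1) (v 2)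

/-- `IsEtaForm ε g` says that `η = g · (standard area form of S²)` is a smooth 2-form on
`S²` such that: (i) `supp η` lies in the `ε`-neighbourhood of the north pole `N`;
(ii) `φ*η = det φ · η` for every `φ ∈ O(2) ⊆ O(3)` (since `φ* (area form) = det φ ·
(area form)`, this amounts to `g ∘ φ = g`); (iii) `∫_{S²} η = 1`, i.e. the integral of
`g` against the surface measure of `S²` is `1`. -/
def IsEtaForm (ε : ℝ) (g : E3 → ℝ) : Prop :=
  ContDiff ℝ (⊤ : ℕ∞) g ∧
  (∀ v : E3, ‖v‖ = 1 → g v ≠ 0 → ‖v - NP‖ < ε) ∧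
  (∀ A : Matrix (Fin 2) (Fin 2) ℝ, A * A.transpose = 1 →
    ∀ v : E3, ‖v‖ = 1 → g (act2 A v) = g v) ∧
  ∫ v : Metric.sphere (0 : E3) 1, g v ∂((volume : Measure E3).toSphere) = 1

/-! ### Configuration space integrals -/

/-- `i`-th partial derivative of a map `ℝⁿ → ℝ³`. -/
def pdv {n : ℕ} (h : EuclideanSpace ℝ (Fin n) → E3) (i : Fin n)
    (x : EuclideanSpace ℝ (Fin n)) : E3 :=
  fderiv ℝ h x (EuclideanSpace.single i 1)

/-- The pullback `h*η` (for `η = g · (area form)`) evaluated at the point `x` on the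
coordinate vectors `(e_i, e_j)`. -/
def form2 {n : ℕ} (g : E3 → ℝ) (h : EuclideanSpace ℝ (Fin n) → E3)
    (x : EuclideanSpace ℝ (Fin n)) (i j : Fin n) : ℝ :=
  g (h x) * det3 (h x) (pdv h i x) (pdv h j x)

/-- `(h*η ∧ k*η)(e₀, e₁, e₂, e₃)` at `x`. -/
def wedge22 (g : E3 → ℝ) (h k : E4 → E3) (x : E4) : ℝ :=
  (1 / 4) * ∑ σ : Equiv.Perm (Fin 4),
    ((Equiv.Perm.sign σ : ℤ) : ℝ) * form2 g h x (σ 0) (σ 1) * form2 g k x (σ 2) (σ 3)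

/-- `(h*η ∧ k*η ∧ l*η)(e₀, …, e₅)` at `x`. -/
def wedge222 (g : E3 → ℝ) (h k l : E6 → E3) (x : E6) : ℝ :=
  (1 / 8) * ∑ σ : Equiv.Perm (Fin 6),
    ((Equiv.Perm.sign σ : ℤ) : ℝ) * form2 g h x (σ 0) (σ 1) * form2 g k x (σ 2) (σ 3) *
      form2 g l x (σ 4) (σ 5)

/-- The configuration space `C_X = {x₁ < x₂ < x₃ < x₄}`. -/
def CX : Set E4 := {x | x 0 < x 1 ∧ x 1 < x 2 ∧ x 2 < x 3}

/-- The integrand `ω_X = h₁₃*η ∧ h₄₂*η` for a long knot. -/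
def omegaX (f : ℝ → E3) (g : E3 → ℝ) : E4 → ℝ :=
  wedge22 g (fun x => unitv (f (x 2) - f (x 0))) (fun x => unitv (f (x 1) - f (x 3)))

/-- The configuration space integral `I_X(f)` of a long knot. -/
def IX (f : ℝ → E3) (g : E3 → ℝ) : ℝ := ∫ x in CX, omegaX f g x

/-- The free point `x₄ ∈ ℝ³` in a `Y`-configuration `(x₁,x₂,x₃;x₄) ∈ ℝ³ × ℝ³ = ℝ⁶`. -/
def ptY (x : E6) : E3 := mk3 (x 3) (x 4) (x 5)

/-- The configuration space `C_Y(f)` for a long knot. -/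
def CY (f : ℝ → E3) : Set E6 :=
  {x | x 0 < x 1 ∧ x 1 < x 2 ∧ ptY x ≠ f (x 0) ∧ ptY x ≠ f (x 1) ∧ ptY x ≠ f (x 2)}

/-- The integrand `ω_Y = h₁₄*η ∧ h₄₂*η ∧ h₃₄*η` for a long knot. -/
def omegaY (f : ℝ → E3) (g : E3 → ℝ) : E6 → ℝ :=
  wedge222 g (fun x => unitv (ptY x - f (x 0))) (fun x => unitv (f (x 1) - ptY x))
    (fun x => unitv (ptY x - f (x 2)))

/-- The configuration space integral `I_Y(f)` of a long knot. -/
def IY (f : ℝ → E3) (g : E3 → ℝ) : ℝ := ∫ x in CY f, omegaY f g x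

def CL1 : Set E4 := {x | x 0 < x 1}
def CL2 : Set E4 := {x | x 1 < x 2}
def CL3 : Set E4 := {x | x 2 < x 3}

/-- The integrand of `I_{𝒳₁}(f)` for a 3-component long link. -/
def omegaL1 (f : Fin 3 → ℝ → E3) (g : E3 → ℝ) : E4 → ℝ :=
  wedge22 g (fun x => unitv (f 1 (x 2) - f 0 (x 0))) (fun x => unitv (f 2 (x 3) - f 0 (x 1)))

/-- The integrand of `I_{𝒳₂}(f)` for a 3-component long link. -/
def omegaL2 (f : Fin 3 → ℝ → E3) (g : E3 → ℝ) : E4 → ℝ :=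
  wedge22 g (fun x => unitv (f 1 (x 1) - f 0 (x 0))) (fun x => unitv (f 1 (x 2) - f 2 (x 3)))

/-- The integrand of `I_{𝒳₃}(f)` for a 3-component long link. -/
def omegaL3 (f : Fin 3 → ℝ → E3) (g : E3 → ℝ) : E4 → ℝ :=
  wedge22 g (fun x => unitv (f 2 (x 2) - f 0 (x 0))) (fun x => unitv (f 1 (x 1) - f 2 (x 3)))

/-- The configuration space integral `I_{𝒳₁}(f)`. -/
def IL1 (f : Fin 3 → ℝ → E3) (g : E3 → ℝ) : ℝ := ∫ x in CL1, omegaL1 f g x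

/-- The configuration space integral `I_{𝒳₂}(f)`. -/
def IL2 (f : Fin 3 → ℝ → E3) (g : E3 → ℝ) : ℝ := ∫ x in CL2, omegaL2 f g x

/-- The configuration space integral `I_{𝒳₃}(f)`. -/
def IL3 (f : Fin 3 → ℝ → E3) (g : E3 → ℝ) : ℝ := ∫ x in CL3, omegaL3 f g x

/-- The configuration space `C_𝒴(f)` for a 3-component long link. -/
def CYL (f : Fin 3 → ℝ → E3) : Set E6 :=
  {x | ptY x ≠ f 0 (x 0) ∧ ptY x ≠ f 1 (x 1) ∧ ptY x ≠ f 2 (x 2)}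

/-- The integrand `ω_𝒴 = h₁₄*η ∧ h₄₂*η ∧ h₃₄*η` for a 3-component long link. -/
def omegaYL (f : Fin 3 → ℝ → E3) (g : E3 → ℝ) : E6 → ℝ :=
  wedge222 g (fun x => unitv (ptY x - f 0 (x 0))) (fun x => unitv (f 1 (x 1) - ptY x))
    (fun x => unitv (ptY x - f 2 (x 2)))

/-- The configuration space integral `I_𝒴(f)`. -/
def ILY (f : Fin 3 → ℝ → E3) (g : E3 → ℝ) : ℝ := ∫ x in CYL f, omegaYL f g x

/-! ### Model triple points -/

/-- The affine parametrization `t ↦ a + t • v` of a straight segment. -/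
def seg (a v : E3) (t : ℝ) : E3 := a + t • v

/-- A model triple point: three straight segments `S₁, S₂, S₃` (indexed by `0, 1, 2`),
`S_k` parametrized by `seg (a k) (v k) : (-δ, δ) → ℝ³`, all parallel to the plane
`N^⊥`, whose projections to `N^⊥` meet pairwise transversely at the single common point
which is the projection of each midpoint `a k`, and with `S₂` higher than `S₁`, `S₃`. -/
def IsModelTriple (a v : Fin 3 → E3) : Prop :=
  (∀ k, v k 2 = 0) ∧ (∀ k, v k ≠ 0) ∧
  pr12 (a 0) = pr12 (a 1) ∧ pr12 (a 1) = pr12 (a 2) ∧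
  (∀ j k, j ≠ k → cross2 (v j) (v k) ≠ 0) ∧
  a 0 2 < a 1 2 ∧ a 2 2 < a 1 2

/-- A model triple point of type `(←, s₁, s₂, s₃)`: `S₁` passes over `S₃`, and the signs
of the crossings `S₁–S₃`, `S₁–S₂`, `S₂–S₃` are `s₁, s₂, s₃` respectively. -/
def ModelLeft (a v : Fin 3 → E3) (s1 s2 s3 : ℝ) : Prop :=
  IsModelTriple a v ∧ a 2 2 < a 0 2 ∧
  s1 = Real.sign (cross2 (v 0) (v 2)) ∧
  s2 = Real.sign (cross2 (v 1) (v 0)) ∧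
  s3 = Real.sign (cross2 (v 1) (v 2))

/-- A model triple point of type `(→, s₁, s₂, s₃)`: `S₃` passes over `S₁`, and the signs
of the crossings `S₁–S₃`, `S₁–S₂`, `S₂–S₃` are `s₁, s₂, s₃` respectively. -/
def ModelRight (a v : Fin 3 → E3) (s1 s2 s3 : ℝ) : Prop :=
  IsModelTriple a v ∧ a 0 2 < a 2 2 ∧
  s1 = Real.sign (cross2 (v 2) (v 0)) ∧
  s2 = Real.sign (cross2 (v 1) (v 0)) ∧
  s3 = Real.sign (cross2 (v 1) (v 2))

/-- The cube `(-δ, δ)⁴ ⊆ ℝ⁴`. -/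
def cube4 (δ : ℝ) : Set E4 := {x | ∀ i, |x i| < δ}

/-- The model configuration space integral `I_X^{X′₁}`: the two points `t₁ < t₂` lie on
`S₁`, the point `t₃` on `S₂` and the point `t₄` on `S₃`; the maps are
`h₁₃ = unit (f₂(t₃) - f₁(t₁))` and `h₄₂ = unit (f₁(t₂) - f₃(t₄))`. -/
def IX1model (a v : Fin 3 → E3) (δ : ℝ) (g : E3 → ℝ) : ℝ :=
  ∫ x in cube4 δ ∩ {x : E4 | x 0 < x 1},
    wedge22 g (fun x => unitv (seg (a 1) (v 1) (x 2) - seg (a 0) (v 0) (x 0)))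
      (fun x => unitv (seg (a 0) (v 0) (x 1) - seg (a 2) (v 2) (x 3))) x

/-- The model configuration space integral `I_X^{X′₂}` (`(X′₂, l)` for a model of type
`←`, `(X′₂, r)` for a model of type `→`): the two points `t₂ < t₃` lie on `S₂`, the
point `t₁` on `S₁` and the point `t₄` on `S₃`; the maps are
`h₁₃ = unit (f₂(t₃) - f₁(t₁))` and `h₄₂ = unit (f₂(t₂) - f₃(t₄))`. -/
def IX2model (a v : Fin 3 → E3) (δ : ℝ) (g : E3 → ℝ) : ℝ :=
  ∫ x in cube4 δ ∩ {x : E4 | x 1 < x 2},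
    wedge22 g (fun x => unitv (seg (a 1) (v 1) (x 2) - seg (a 0) (v 0) (x 0)))
      (fun x => unitv (seg (a 1) (v 1) (x 1) - seg (a 2) (v 2) (x 3))) x

/-- The model configuration space integral `I_X^{X′₃}`: the two points `t₃ < t₄` lie on
`S₃`, the point `t₁` on `S₁` and the point `t₂` on `S₂`; the maps are
`h₁₃ = unit (f₃(t₃) - f₁(t₁))` and `h₄₂ = unit (f₂(t₂) - f₃(t₄))`. -/
def IX3model (a v : Fin 3 → E3) (δ : ℝ) (g : E3 → ℝ) : ℝ :=
  ∫ x in cube4 δ ∩ {x : E4 | x 2 < x 3},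
    wedge22 g (fun x => unitv (seg (a 2) (v 2) (x 2) - seg (a 0) (v 0) (x 0)))
      (fun x => unitv (seg (a 1) (v 1) (x 1) - seg (a 2) (v 2) (x 3))) x

/-- The model `Y`-integral `I_Y^{s₁,s₂,s₃}` over `(-δ,δ)³ × ℝ³`: the point `t_k` lies on
`S_k` and `x₄ ∈ ℝ³` is free; the maps are `h₁₄ = unit (x₄ - f₁(t₁))`,
`h₄₂ = unit (f₂(t₂) - x₄)` and `h₃₄ = unit (x₄ - f₃(t₃))`. -/
def IYmodel (a v : Fin 3 → E3) (δ : ℝ) (g : E3 → ℝ) : ℝ :=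
  ∫ x in {x : E6 | |x 0| < δ ∧ |x 1| < δ ∧ |x 2| < δ ∧
      ptY x ≠ seg (a 0) (v 0) (x 0) ∧ ptY x ≠ seg (a 1) (v 1) (x 1) ∧
      ptY x ≠ seg (a 2) (v 2) (x 2)},
    wedge222 g (fun x => unitv (ptY x - seg (a 0) (v 0) (x 0)))
      (fun x => unitv (seg (a 1) (v 1) (x 1) - ptY x))
      (fun x => unitv (ptY x - seg (a 2) (v 2) (x 2))) x

/-- Near every (triple or higher) multiple point of the diagram, the strands of the long
knot `f` are straight segments parallel to the plane `N^⊥`. -/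
def StraightNearMultipleK (f : ℝ → E3) : Prop :=
  ∀ t u v : ℝ, t ≠ u → u ≠ v → t ≠ v →
    pr12 (f t) = pr12 (f u) → pr12 (f u) = pr12 (f v) →
    ∃ δ > (0 : ℝ), ∃ w : E3, w 2 = 0 ∧ ∀ s : ℝ, |s - t| < δ → f s = f t + (s - t) • w

/-- Near every (triple or higher) multiple point of the diagram, the strands of the long
link `f` are straight segments parallel to the plane `N^⊥`. -/
def StraightNearMultipleL (f : Fin 3 → ℝ → E3) : Prop :=
  ∀ (i j k : Fin 3) (t u v : ℝ), (i, t) ≠ (j, u) → (j, u) ≠ (k, v) → (i, t) ≠ (k, v) →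
    pr12 (f i t) = pr12 (f j u) → pr12 (f j u) = pr12 (f k v) →
    ∃ δ > (0 : ℝ), ∃ w : E3, w 2 = 0 ∧ ∀ s : ℝ, |s - t| < δ → f i s = f i t + (s - t) • w

/-! ### Closed 2-component links and the linking number -/

/-- A smooth loop in `ℝ³`, parametrized with period 1 and injective on a period. -/
def IsLoop (f : ℝ → E3) : Prop :=
  ContDiff ℝ (⊤ : ℕ∞) f ∧ (∀ t, f (t + 1) = f t) ∧ (∀ t, deriv f t ≠ 0) ∧
    ∀ s t : ℝ, f s = f t → ∃ n : ℤ, t - s = n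

/-- The diagram of the 2-component link `(f 0, f 1)` has only transverse double points. -/
def OnlyDouble2 (f : Fin 2 → ℝ → E3) : Prop :=
  (∀ i j s t, f i s ≠ f j t → pr12 (f i s) = pr12 (f j t) →
      cross2 (deriv (f i) s) (deriv (f j) t) ≠ 0) ∧
  ∀ i j k s t u, f i s ≠ f j t → f j t ≠ f k u → f i s ≠ f k u →
    pr12 (f i s) = pr12 (f j t) → pr12 (f j t) = pr12 (f k u) → False

/-- The crossings of the diagram at which `f₂` passes over `f₁` (one parameter period). -/
def Crossing12 (f₁ f₂ : ℝ → E3) : Set (ℝ × ℝ) :=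
  {p | p.1 ∈ Ico (0 : ℝ) 1 ∧ p.2 ∈ Ico (0 : ℝ) 1 ∧
    pr12 (f₁ p.1) = pr12 (f₂ p.2) ∧ pr3 (f₁ p.1) < pr3 (f₂ p.2)}

/-- The sum of the signs of the crossings of the diagram at which `f₂` passes over `f₁`;
this is the linking number `lk(f₁, f₂)`, i.e. the mapping degree of
`h : S¹ × S¹ → S²`. -/
def lkSum (f₁ f₂ : ℝ → E3) : ℝ :=
  ∑ᶠ p ∈ Crossing12 f₁ f₂, Real.sign (cross2 (deriv f₂ p.2) (deriv f₁ p.1))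

/-- The fundamental domain `[0,1) × [0,1)` of `S¹ × S¹`. -/
def sq01 : Set E2 := {x | x 0 ∈ Ico (0 : ℝ) 1 ∧ x 1 ∈ Ico (0 : ℝ) 1}

/-- `∫_{S¹×S¹} h*η` for `h(x₁,x₂) = unit (f₂(x₂) - f₁(x₁))`. -/
def lkIntegral (f₁ f₂ : ℝ → E3) (g : E3 → ℝ) : ℝ :=
  ∫ x in sq01, form2 g (fun x : E2 => unitv (f₂ (x 1) - f₁ (x 0))) x 0 1

/-!
The chord from the under- to the over-strand of a horizontal crossing, seen in the gnomonic chart of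
`S²` at the north pole, is a linear function of the two strand parameters whose determinant has the
sign of the crossing. Hence the integrand of `I_X^{X′₁}` and `I_X^{X′₃}` splits as a product of
pullbacks of one density under two linear maps of disjoint pairs of coordinates. For small `ε` it
vanishes outside the cube `(-δ, δ)⁴`, and it is even, so integrating over a half-space gives half of
the full integral. By Fubini and a linear change of variables this is `1/2` times the product of the
two crossing signs and a constant depending only on `η`; replacing `(s₁, s₂, s₃)` by
`(s₁, -s₂, -s₃)` or `(-s₁, -s₂, -s₃)` flips one or both of these signs.
-/

section Integration

lemma real_sign_div_of_pos (c : ℝ) {r : ℝ} (hr : 0 < r) : Real.sign (c / r) = Real.sign c := by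
  simp only [Real.sign, div_lt_iff₀ hr, zero_mul, div_pos_iff_of_pos_right hr]

lemma setIntegral_eq_half_smul_integral_of_even {G E : Type*} [InvolutiveNeg G]
    [MeasurableSpace G] [MeasurableNeg G] [NormedAddCommGroup E] [NormedSpace ℝ E] {μ : Measure G}
    [μ.IsNegInvariant] {A : Set G} (hA : MeasurableSet A)
    (hA_neg : (Aᶜ : Set G) =ᵐ[μ] Neg.neg ⁻¹' A) {F : G → E} (hF : ∀ x, F (-x) = F x) :
    ∫ x in A, F x ∂μ = (1 / 2 : ℝ) • ∫ x, F x ∂μ := by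
  have neg_preserving : MeasurePreserving (Neg.neg : G → G) μ μ := Measure.measurePreserving_neg μ
  have neg_embedding : MeasurableEmbedding (Neg.neg : G → G) :=
    (MeasurableEquiv.neg G).measurableEmbedding
  have integral_compl : ∫ x in Aᶜ, F x ∂μ = ∫ x in A, F x ∂μ := by
    rw [setIntegral_congr_set hA_neg, ← neg_preserving.setIntegral_preimage_emb neg_embedding F A]
    simp only [hF]
  by_cases hFA : IntegrableOn F A μ
  · have hFAc : IntegrableOn F Aᶜ μ := by
      rw [integrableOn_congr_set_ae hA_neg]
      simpa only [Function.comp_def, hF] using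
        (neg_preserving.integrableOn_comp_preimage neg_embedding (f := F)).2 hFA
    have F_integrable : Integrable F μ := by
      rw [← integrableOn_univ, ← union_compl_self A]
      exact hFA.union hFAc
    rw [← integral_add_compl hA F_integrable, integral_compl]
    module
  · rw [integral_undef hFA, integral_undef fun h => hFA h.integrableOn, smul_zero]

lemma compl_setOf_lt_ae_eq_neg_preimage {ι : Type*} [Fintype ι] {i j : ι} (hij : i ≠ j) :
    ({x : EuclideanSpace ℝ ι | x i < x j}ᶜ : Set _) =ᵐ[volume]
      Neg.neg ⁻¹' {x : EuclideanSpace ℝ ι | x i < x j} := by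
  classical
  let diagonal : Submodule ℝ (EuclideanSpace ℝ ι) :=
    (EuclideanSpace.proj i - EuclideanSpace.proj j : EuclideanSpace ℝ ι →L[ℝ] ℝ).ker
  have diagonal_ne_top : diagonal ≠ ⊤ := fun h => by
    have : EuclideanSpace.single i (1 : ℝ) ∈ diagonal := h ▸ Submodule.mem_top
    simp [diagonal, hij.symm] at this
  have off_diagonal : ∀ᵐ x : EuclideanSpace ℝ ι, x ∉ diagonal :=
    measure_eq_zero_iff_ae_notMem.1 (Measure.addHaar_submodule volume diagonal diagonal_ne_top)
  filter_upwards [off_diagonal] with x hx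
  have hx : x i ≠ x j := by simpa [diagonal, sub_eq_zero] using hx
  refine propext (?_ : ¬ x i < x j ↔ (-x) i < (-x) j)
  simp only [PiLp.neg_apply, neg_lt_neg_iff, not_lt]
  exact ⟨fun h => h.lt_of_ne hx.symm, le_of_lt⟩

lemma integral_det_smul_comp {V E : Type*} [NormedAddCommGroup V] [NormedSpace ℝ V]
    [FiniteDimensional ℝ V] [MeasurableSpace V] [BorelSpace V] [NormedAddCommGroup E]
    [NormedSpace ℝ E] (μ : Measure V) [μ.IsAddHaarMeasure] {f : V →ₗ[ℝ] V}
    (hf : LinearMap.det f ≠ 0) (F : V → E) :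
    ∫ x, LinearMap.det f • F (f x) ∂μ = Real.sign (LinearMap.det f) • ∫ y, F y ∂μ := by
  have f_embedding : MeasurableEmbedding f :=
    (LinearMap.equivOfDetNeZero f hf).toContinuousLinearEquiv.toHomeomorph.measurableEmbedding
  have det_mul_abs_inv : LinearMap.det f * |(LinearMap.det f)⁻¹| = Real.sign (LinearMap.det f) := by
    rcases hf.lt_or_gt with h | h
    · rw [abs_inv, abs_of_neg h, Real.sign_of_neg h, inv_neg, mul_neg, mul_inv_cancel₀ hf]
    · rw [abs_inv, abs_of_pos h, Real.sign_of_pos h, mul_inv_cancel₀ hf]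
  rw [integral_smul, ← f_embedding.integral_map F,
    Measure.map_linearMap_addHaar_eq_smul_addHaar μ hf, integral_smul_measure,
    ENNReal.toReal_ofReal (abs_nonneg _), smul_smul, det_mul_abs_inv]

lemma integral_det_smul_comp_mulVec {ι E : Type*} [Fintype ι] [DecidableEq ι]
    [NormedAddCommGroup E] [NormedSpace ℝ E] {M : Matrix ι ι ℝ} (hM : M.det ≠ 0)
    (F : (ι → ℝ) → E) :
    ∫ x, M.det • F (M.mulVec x) = Real.sign M.det • ∫ y, F y := by
  simpa only [LinearMap.det_toLin', Matrix.toLin'_apply] using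
    integral_det_smul_comp volume (f := Matrix.toLin' M) (by rwa [LinearMap.det_toLin']) F

lemma integral_mul_comp_sumEquiv {ι κ ν 𝕜 : Type*} [Fintype ι] [Fintype κ] [Fintype ν] [RCLike 𝕜]
    (e : ι ⊕ κ ≃ ν) (F : (ι → ℝ) → 𝕜) (G : (κ → ℝ) → 𝕜) :
    ∫ x : EuclideanSpace ℝ ν, F (fun i => x (e (.inl i))) * G (fun k => x (e (.inr k))) =
      (∫ y, F y) * ∫ z, G z := by
  let split : EuclideanSpace ℝ ν ≃ᵐ (ι → ℝ) × (κ → ℝ) :=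
    (MeasurableEquiv.toLp 2 (ν → ℝ)).symm.trans <|
      (MeasurableEquiv.piCongrLeft (fun _ => ℝ) e).symm.trans <|
        MeasurableEquiv.sumPiEquivProdPi fun _ => ℝ
  have split_preserving : MeasurePreserving split :=
    (volume_measurePreserving_sumPiEquivProdPi _).comp <|
      (volume_measurePreserving_piCongrLeft _ e).symm.comp <|
        EuclideanSpace.volume_preserving_symm_measurableEquiv_toLp ν
  rw [← integral_prod_mul, ← Measure.volume_eq_prod, ← split_preserving.integral_comp']
  rfl

end Integration

section GnomonicChart

@[simp] lemma mk3_apply_zero (x y z : ℝ) : mk3 x y z 0 = x := rfl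

@[simp] lemma mk3_apply_one (x y z : ℝ) : mk3 x y z 1 = y := rfl

@[simp] lemma mk3_apply_two (x y z : ℝ) : mk3 x y z 2 = z := rfl

lemma norm_unitv {w : E3} (hw : w ≠ 0) : ‖unitv w‖ = 1 := by
  rw [unitv, norm_smul, norm_inv, norm_norm, inv_mul_cancel₀ (norm_ne_zero_iff.2 hw)]

lemma unitv_smul {c : ℝ} (hc : 0 < c) (w : E3) : unitv (c • w) = unitv w := by
  rw [unitv, unitv, norm_smul, Real.norm_of_nonneg hc.le, smul_smul, mul_inv_rev, mul_assoc,
    inv_mul_cancel₀ hc.ne', mul_one]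

lemma unitv_apply (w : E3) (i : Fin 3) : unitv w i = ‖w‖⁻¹ * w i := rfl

/-- The inclusion of `ℝ²` into `ℝ³` as the plane tangent to `S²` at the north pole. Composed with
`unitv` it is the inverse of the gnomonic chart of the upper hemisphere. -/
def gnomonicLift (y : Fin 2 → ℝ) : E3 := mk3 (y 0) (y 1) 1

/-- The gnomonic chart, the projection of the upper half-space from the origin to the plane tangent
to `S²` at the north pole. -/
def gnomonicProj (p : E3) : Fin 2 → ℝ := ![p 0 / p 2, p 1 / p 2]

/-- The density, with respect to Lebesgue measure in the gnomonic chart, of `g` times the area form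
of `S²`. -/
def gnomonicDensity (g : E3 → ℝ) (y : Fin 2 → ℝ) : ℝ :=
  g (unitv (gnomonicLift y)) * ‖gnomonicLift y‖⁻¹ ^ 3

lemma gnomonicLift_ne_zero (y : Fin 2 → ℝ) : gnomonicLift y ≠ 0 := fun h =>
  one_ne_zero (congrArg (fun v : E3 => v 2) h)

lemma gnomonicProj_unitv_gnomonicLift (y : Fin 2 → ℝ) :
    gnomonicProj (unitv (gnomonicLift y)) = y := by
  have inv_norm_ne_zero : ‖gnomonicLift y‖⁻¹ ≠ 0 :=
    inv_ne_zero (norm_ne_zero_iff.2 (gnomonicLift_ne_zero y))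
  ext i
  fin_cases i <;> exact (mul_div_mul_left _ _ inv_norm_ne_zero).trans (div_one _)

lemma gnomonicProj_NP : gnomonicProj NP = 0 := by
  ext i
  fin_cases i <;> simp [gnomonicProj, NP]

lemma continuousAt_gnomonicProj_NP : ContinuousAt gnomonicProj NP := by
  refine continuousAt_pi.2 fun i => ?_
  fin_cases i <;>
  exact ContinuousAt.div₀ (by fun_prop) (by fun_prop) (by simp [NP])

lemma norm_gnomonicLift_neg (y : Fin 2 → ℝ) : ‖gnomonicLift (-y)‖ = ‖gnomonicLift y‖ := by
  simp [EuclideanSpace.norm_eq, Fin.sum_univ_succ, gnomonicLift, mk3]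

lemma unitv_gnomonicLift_neg (y : Fin 2 → ℝ) :
    unitv (gnomonicLift (-y)) = act2 (-1) (unitv (gnomonicLift y)) := by
  have coord_zero : gnomonicLift (-y) 0 = -gnomonicLift y 0 := rfl
  have coord_one : gnomonicLift (-y) 1 = -gnomonicLift y 1 := rfl
  have coord_two : gnomonicLift (-y) 2 = gnomonicLift y 2 := rfl
  ext i
  fin_cases i <;>
    simp [unitv_apply, norm_gnomonicLift_neg, act2, coord_zero, coord_one, coord_two]

lemma gnomonicDensity_neg {g : E3 → ℝ} (hg : ∀ v : E3, ‖v‖ = 1 → g (act2 (-1) v) = g v)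
    (y : Fin 2 → ℝ) : gnomonicDensity g (-y) = gnomonicDensity g y := by
  rw [gnomonicDensity, gnomonicDensity, unitv_gnomonicLift_neg, norm_gnomonicLift_neg,
    hg _ (norm_unitv (gnomonicLift_ne_zero y))]

lemma eventually_abs_lt_of_gnomonicDensity_mulVec_ne_zero {M : Matrix (Fin 2) (Fin 2) ℝ}
    (hM : M.det ≠ 0) {δ : ℝ} (hδ : 0 < δ) :
    ∀ᶠ ε in 𝓝[>] (0 : ℝ), ∀ g : E3 → ℝ, (∀ v : E3, ‖v‖ = 1 → g v ≠ 0 → ‖v - NP‖ < ε) →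
      ∀ y, gnomonicDensity g (M.mulVec y) ≠ 0 → ∀ i, |y i| < δ := by
  have coords_small : ∀ᶠ p in 𝓝 NP, ∀ i, |(M⁻¹.mulVec (gnomonicProj p)) i| < δ := by
    have mulVec_continuous : Continuous fun y : Fin 2 → ℝ => M⁻¹.mulVec y := by fun_prop
    refine eventually_all.2 fun i => ContinuousAt.eventually_lt
      ((continuous_apply i).continuousAt.comp
        (mulVec_continuous.continuousAt.comp continuousAt_gnomonicProj_NP)).abs
      continuousAt_const ?_
    simpa [gnomonicProj_NP] using hδ
  obtain ⟨ε₀, hε₀, ball_subset⟩ := Metric.eventually_nhds_iff.1 coords_small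
  filter_upwards [Ioo_mem_nhdsGT hε₀] with ε hε g hg y hy i
  have unit_near_NP := hg _ (norm_unitv (gnomonicLift_ne_zero _)) (left_ne_zero_of_mul hy)
  have := ball_subset ((dist_eq_norm _ _).trans_lt (unit_near_NP.trans hε.2)) i
  rwa [gnomonicProj_unitv_gnomonicLift, Matrix.mulVec_mulVec,
    Matrix.nonsing_inv_mul _ hM.isUnit, Matrix.one_mulVec] at this

end GnomonicChart

section PulledBackForms

lemma form2_unitv {n : ℕ} (g : E3 → ℝ) {P : EuclideanSpace ℝ (Fin n) → E3}
    {x : EuclideanSpace ℝ (Fin n)} (hP : DifferentiableAt ℝ P x) (hx : P x ≠ 0) (i j : Fin n) :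
    form2 g (fun x => unitv (P x)) x i j =
      g (unitv (P x)) * ‖P x‖⁻¹ ^ 3 * det3 (P x) (pdv P i x) (pdv P j x) := by
  have norm_inv_diff : DifferentiableAt ℝ (fun x => ‖P x‖⁻¹) x :=
    (hP.norm ℝ hx).inv (norm_ne_zero_iff.2 hx)
  have pdv_unitv : ∀ k, pdv (fun x => unitv (P x)) k x = ‖P x‖⁻¹ • pdv P k x +
      fderiv ℝ (fun x => ‖P x‖⁻¹) x (EuclideanSpace.single k 1) • P x := fun k => by
    simp only [pdv, unitv, fderiv_fun_smul norm_inv_diff hP]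
    rfl
  simp only [form2, pdv_unitv]
  simp only [det3, unitv, PiLp.add_apply, PiLp.smul_apply, smul_eq_mul]
  ring

/-- The value of the elementary 2-form `dx_a ∧ dx_b` on the coordinate vectors `(e_i, e_j)`, as an
integer so that sums of such values can be decided. -/
def elementaryForm2 {n : ℕ} (a b i j : Fin n) : ℤ :=
  (if a = i then 1 else 0) * (if b = j then 1 else 0) -
    (if a = j then 1 else 0) * (if b = i then 1 else 0)

lemma form2_unitv_gnomonicLift_mulVec {n : ℕ} (g : E3 → ℝ) (M : Matrix (Fin 2) (Fin 2) ℝ)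
    (a b : Fin n) (x : EuclideanSpace ℝ (Fin n)) (i j : Fin n) :
    form2 g (fun x : EuclideanSpace ℝ (Fin n) => unitv (gnomonicLift (M.mulVec ![x a, x b])))
        x i j =
      M.det * gnomonicDensity g (M.mulVec ![x a, x b]) * elementaryForm2 a b i j := by
  let P : EuclideanSpace ℝ (Fin n) → E3 := fun x => gnomonicLift (M.mulVec ![x a, x b])
  let col (k : Fin 2) : E3 := mk3 (M 0 k) (M 1 k) 0
  let L : EuclideanSpace ℝ (Fin n) →L[ℝ] E3 :=
    (EuclideanSpace.proj a : EuclideanSpace ℝ (Fin n) →L[ℝ] ℝ).smulRight (col 0) +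
      (EuclideanSpace.proj b : EuclideanSpace ℝ (Fin n) →L[ℝ] ℝ).smulRight (col 1)
  have P_affine : P = fun x => NP + L x := by
    ext x k
    fin_cases k <;>
      simp [P, L, col, NP, gnomonicLift, Matrix.mulVec, dotProduct, Fin.sum_univ_two, mul_comm]
  have P_hasFDerivAt : HasFDerivAt P L x := P_affine ▸ L.hasFDerivAt.const_add NP
  have pdv_P : ∀ k, pdv P k x =
      (if a = k then 1 else 0 : ℝ) • col 0 + (if b = k then 1 else 0 : ℝ) • col 1 := fun k => by
    simp [pdv, P_hasFDerivAt.fderiv, L]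
  rw [form2_unitv g P_hasFDerivAt.differentiableAt (gnomonicLift_ne_zero _), pdv_P, pdv_P]
  simp only [P, col, det3, gnomonicDensity, gnomonicLift, elementaryForm2, Matrix.det_fin_two,
    PiLp.add_apply, PiLp.smul_apply, smul_eq_mul, mk3_apply_zero, mk3_apply_one, mk3_apply_two]
  push_cast
  ring

/- `(0, 2, 3, 1)` is an even permutation, and the antisymmetrization of each of the two forms
contributes a factor `2`. -/
lemma sum_sign_mul_elementaryForm2 : ∑ σ : Equiv.Perm (Fin 4), (Equiv.Perm.sign σ : ℤ) *
    elementaryForm2 0 2 (σ 0) (σ 1) * elementaryForm2 3 1 (σ 2) (σ 3) = 4 := by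
  decide +kernel

lemma wedge22_of_form2_eq_elementaryForm2 {g : E3 → ℝ} {h k : E4 → E3} {x : E4} {A B : ℝ}
    (hA : ∀ i j, form2 g h x i j = A * elementaryForm2 0 2 i j)
    (hB : ∀ i j, form2 g k x i j = B * elementaryForm2 3 1 i j) :
    wedge22 g h k x = A * B := by
  have summand_eq (σ : Equiv.Perm (Fin 4)) :
      ((Equiv.Perm.sign σ : ℤ) : ℝ) * (A * elementaryForm2 0 2 (σ 0) (σ 1)) *
          (B * elementaryForm2 3 1 (σ 2) (σ 3)) =
        A * B * (((Equiv.Perm.sign σ : ℤ) * elementaryForm2 0 2 (σ 0) (σ 1) *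
          elementaryForm2 3 1 (σ 2) (σ 3) : ℤ) : ℝ) := by
    push_cast
    ring
  simp only [wedge22, hA, hB, summand_eq]
  rw [← Finset.mul_sum, ← Int.cast_sum, sum_sign_mul_elementaryForm2]
  push_cast
  ring

lemma wedge22_unitv_gnomonicLift_mulVec (g : E3 → ℝ) (M M' : Matrix (Fin 2) (Fin 2) ℝ) (x : E4) :
    wedge22 g (fun x => unitv (gnomonicLift (M.mulVec ![x 0, x 2])))
      (fun x => unitv (gnomonicLift (M'.mulVec ![x 3, x 1]))) x =
    M.det * gnomonicDensity g (M.mulVec ![x 0, x 2]) *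
      (M'.det * gnomonicDensity g (M'.mulVec ![x 3, x 1])) :=
  wedge22_of_form2_eq_elementaryForm2 (form2_unitv_gnomonicLift_mulVec g M 0 2 x)
    (form2_unitv_gnomonicLift_mulVec g M' 3 1 x)

end PulledBackForms

section CrossingIntegrals

/-- A density on `S²` concentrated at the north pole: continuous (so that the model integrals are
not junk values), supported in the `ε`-neighbourhood of the pole, and invariant under the half-turn
about the vertical axis. -/
structure IsPolarDensity (ε : ℝ) (g : E3 → ℝ) : Prop where
  continuousOn : ContinuousOn g (Metric.sphere 0 1)
  norm_sub_NP_lt : ∀ v : E3, ‖v‖ = 1 → g v ≠ 0 → ‖v - NP‖ < ε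
  half_turn : ∀ v : E3, ‖v‖ = 1 → g (act2 (-1) v) = g v

lemma IsEtaForm.isPolarDensity {ε : ℝ} {g : E3 → ℝ} (hg : IsEtaForm ε g) : IsPolarDensity ε g where
  continuousOn := hg.1.continuous.continuousOn
  norm_sub_NP_lt := hg.2.1
  half_turn := hg.2.2.1 (-1) (by simp)

lemma exists_pos_forall_isEtaForm_of_eventually {p : (E3 → ℝ) → Prop}
    (h : ∀ᶠ ε in 𝓝[>] (0 : ℝ), ∀ g, IsPolarDensity ε g → p g) :
    ∃ ε₀ > (0 : ℝ), ∀ ε : ℝ, 0 < ε → ε < ε₀ → ∀ g : E3 → ℝ, IsEtaForm ε g → p g := by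
  obtain ⟨ε₀, ε₀_pos, hε₀⟩ := (nhdsGT_basis (0 : ℝ)).eventually_iff.1 h
  exact ⟨ε₀, ε₀_pos, fun ε hε hεε₀ g hg => hε₀ ⟨hε, hεε₀⟩ g hg.isPolarDensity⟩

lemma integral_wedge22_unitv_gnomonicLift_mulVec (g : E3 → ℝ) {M M' : Matrix (Fin 2) (Fin 2) ℝ}
    (hM : M.det ≠ 0) (hM' : M'.det ≠ 0) :
    ∫ x : E4, wedge22 g (fun x => unitv (gnomonicLift (M.mulVec ![x 0, x 2])))
        (fun x => unitv (gnomonicLift (M'.mulVec ![x 3, x 1]))) x =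
      Real.sign M.det * Real.sign M'.det * (∫ y, gnomonicDensity g y) ^ 2 := by
  let e : Fin 2 ⊕ Fin 2 ≃ Fin 4 := Equiv.ofBijective (Sum.elim ![0, 2] ![3, 1]) (by decide)
  have fubini := integral_mul_comp_sumEquiv e
    (fun y => M.det • gnomonicDensity g (M.mulVec y))
    (fun z => M'.det • gnomonicDensity g (M'.mulVec z))
  rw [integral_det_smul_comp_mulVec hM, integral_det_smul_comp_mulVec hM'] at fubini
  have left_coords (x : E4) : (fun i => x (e (.inl i))) = ![x 0, x 2] := by
    ext i; fin_cases i <;> rfl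
  have right_coords (x : E4) : (fun i => x (e (.inr i))) = ![x 3, x 1] := by
    ext i; fin_cases i <;> rfl
  simp only [left_coords, right_coords, smul_eq_mul] at fubini
  simp only [wedge22_unitv_gnomonicLift_mulVec, fubini]
  ring

lemma eventually_setIntegral_wedge22_unitv_gnomonicLift_mulVec
    {M M' : Matrix (Fin 2) (Fin 2) ℝ} (hM : M.det ≠ 0) (hM' : M'.det ≠ 0)
    {δ : ℝ} (hδ : 0 < δ) {i j : Fin 4} (hij : i ≠ j) :
    ∀ᶠ ε in 𝓝[>] (0 : ℝ), ∀ g, IsPolarDensity ε g →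
      ∫ x in cube4 δ ∩ {x : E4 | x i < x j},
          wedge22 g (fun x => unitv (gnomonicLift (M.mulVec ![x 0, x 2])))
            (fun x => unitv (gnomonicLift (M'.mulVec ![x 3, x 1]))) x =
        1 / 2 * (Real.sign M.det * Real.sign M'.det * (∫ y, gnomonicDensity g y) ^ 2) := by
  filter_upwards [eventually_abs_lt_of_gnomonicDensity_mulVec_ne_zero hM hδ,
    eventually_abs_lt_of_gnomonicDensity_mulVec_ne_zero hM' hδ] with ε small small' g hg
  have halfSpace_measurable : MeasurableSet {x : E4 | x i < x j} :=
    (isOpen_lt (by fun_prop) (by fun_prop)).measurableSet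
  rw [← integral_wedge22_unitv_gnomonicLift_mulVec g hM hM',
    ← smul_eq_mul, ← setIntegral_eq_half_smul_integral_of_even halfSpace_measurable
      (compl_setOf_lt_ae_eq_neg_preimage hij)]
  · refine (setIntegral_eq_of_subset_of_forall_sdiff_eq_zero halfSpace_measurable
      inter_subset_right fun x hx => ?_).symm
    rw [wedge22_unitv_gnomonicLift_mulVec]
    by_contra nonzero
    have abs_lt := small g hg.norm_sub_NP_lt _
      (right_ne_zero_of_mul (left_ne_zero_of_mul nonzero))
    have abs_lt' := small' g hg.norm_sub_NP_lt _
      (right_ne_zero_of_mul (right_ne_zero_of_mul nonzero))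
    refine hx.2 ⟨fun k => ?_, hx.1⟩
    fin_cases k
    exacts [abs_lt 0, abs_lt' 1, abs_lt 1, abs_lt' 0]
  · intro x
    have neg_pair (s t : ℝ) : ![-s, -t] = -![s, t] := by simp
    simp only [wedge22_unitv_gnomonicLift_mulVec, PiLp.neg_apply, neg_pair, Matrix.mulVec_neg,
      gnomonicDensity_neg hg.half_turn]

end CrossingIntegrals

section ModelTriplePoints

/-- The matrix taking parameters `(s, t)` on an under- and an over-strand with horizontal
velocities `w` and `v`, at height difference `H` above a common point of the diagram, to the
position in the gnomonic chart of the chord from the under- to the over-strand. -/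
def chordMatrix (H : ℝ) (w v : E3) : Matrix (Fin 2) (Fin 2) ℝ :=
  H⁻¹ • !![-w 0, v 0; -w 1, v 1]

lemma det_chordMatrix (H : ℝ) (w v : E3) : (chordMatrix H w v).det = cross2 v w / H ^ 2 := by
  rw [chordMatrix, Matrix.det_smul, Fintype.card_fin, Matrix.det_fin_two_of, cross2]
  ring

/-- The segment `seg b w` passes under the segment `seg a v` at a transverse crossing with both
midpoints over the crossing point, and both segments are horizontal. -/
structure IsHorizontalCrossing (b w a v : E3) : Prop where
  horizontal_under : w 2 = 0
  horizontal_over : v 2 = 0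
  pr12_eq : pr12 b = pr12 a
  lt : b 2 < a 2
  cross2_ne_zero : cross2 v w ≠ 0

lemma smul_gnomonicLift_chordMatrix_mulVec {H : ℝ} (hH : H ≠ 0) (w v : E3) (s t : ℝ) :
    H • gnomonicLift ((chordMatrix H w v).mulVec ![s, t]) =
      mk3 (t * v 0 - s * w 0) (t * v 1 - s * w 1) H := by
  have mulVec_eq : (chordMatrix H w v).mulVec ![s, t] =
      H⁻¹ • ![t * v 0 - s * w 0, t * v 1 - s * w 1] := by
    rw [chordMatrix, Matrix.smul_mulVec, Matrix.mulVec_fin_two]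
    congr! 2 <;> simp [neg_add_eq_sub, mul_comm]
  ext i
  fin_cases i <;> simp [gnomonicLift, mulVec_eq, hH]

namespace IsHorizontalCrossing

variable {b w a v : E3}

lemma det_chordMatrix_ne_zero (h : IsHorizontalCrossing b w a v) :
    (chordMatrix (a 2 - b 2) w v).det ≠ 0 := by
  rw [det_chordMatrix]
  exact div_ne_zero h.cross2_ne_zero (pow_ne_zero 2 (sub_pos.2 h.lt).ne')

lemma sign_det_chordMatrix (h : IsHorizontalCrossing b w a v) :
    Real.sign (chordMatrix (a 2 - b 2) w v).det = Real.sign (cross2 v w) := by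
  rw [det_chordMatrix, real_sign_div_of_pos _ (pow_pos (sub_pos.2 h.lt) 2)]

lemma unitv_seg_sub_seg (h : IsHorizontalCrossing b w a v) (s t : ℝ) :
    unitv (seg a v t - seg b w s) =
      unitv (gnomonicLift ((chordMatrix (a 2 - b 2) w v).mulVec ![s, t])) := by
  have height_pos : 0 < a 2 - b 2 := sub_pos.2 h.lt
  obtain ⟨b_zero, b_one⟩ : b 0 = a 0 ∧ b 1 = a 1 := Prod.ext_iff.1 h.pr12_eq
  rw [← unitv_smul height_pos (gnomonicLift _),
    smul_gnomonicLift_chordMatrix_mulVec height_pos.ne']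
  congr 1
  ext i
  fin_cases i <;> simp [seg, h.horizontal_under, h.horizontal_over, b_zero, b_one]

lemma eventually_setIntegral_wedge22_eq {b' w' a' v' : E3} (h : IsHorizontalCrossing b w a v)
    (h' : IsHorizontalCrossing b' w' a' v') {δ : ℝ} (hδ : 0 < δ) {i j : Fin 4} (hij : i ≠ j) :
    ∀ᶠ ε in 𝓝[>] (0 : ℝ), ∀ g, IsPolarDensity ε g →
      ∫ x in cube4 δ ∩ {x : E4 | x i < x j},
          wedge22 g (fun x => unitv (seg a v (x 2) - seg b w (x 0)))
            (fun x => unitv (seg a' v' (x 1) - seg b' w' (x 3))) x =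
        1 / 2 * (Real.sign (cross2 v w) * Real.sign (cross2 v' w') *
          (∫ y, gnomonicDensity g y) ^ 2) := by
  simpa only [h.unitv_seg_sub_seg, h'.unitv_seg_sub_seg, h.sign_det_chordMatrix,
    h'.sign_det_chordMatrix] using
    eventually_setIntegral_wedge22_unitv_gnomonicLift_mulVec h.det_chordMatrix_ne_zero
      h'.det_chordMatrix_ne_zero hδ hij

end IsHorizontalCrossing

variable {a v : Fin 3 → E3} {s1 s2 s3 δ : ℝ}

lemma IsModelTriple.isHorizontalCrossing (h : IsModelTriple a v) {j k : Fin 3}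
    (hjk : a j 2 < a k 2) : IsHorizontalCrossing (a j) (v j) (a k) (v k) := by
  obtain ⟨horizontal, -, pr12_01, pr12_12, transverse, -⟩ := h
  have pr12_eq (i : Fin 3) : pr12 (a i) = pr12 (a 0) := by
    fin_cases i
    exacts [rfl, pr12_01.symm, (pr12_01.trans pr12_12).symm]
  exact ⟨horizontal j, horizontal k, (pr12_eq j).trans (pr12_eq k).symm, hjk,
    transverse k j fun h => hjk.ne (h ▸ rfl)⟩

lemma ModelLeft.eventually_IX1model_eq (h : ModelLeft a v s1 s2 s3) (hδ : 0 < δ) :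
    ∀ᶠ ε in 𝓝[>] (0 : ℝ), ∀ g, IsPolarDensity ε g →
      IX1model a v δ g = 1 / 2 * (s2 * s1 * (∫ y, gnomonicDensity g y) ^ 2) := by
  obtain ⟨triple, lt_20, rfl, rfl, -⟩ := h
  have ⟨_, _, _, _, _, lt_01, _⟩ := triple
  exact (triple.isHorizontalCrossing lt_01).eventually_setIntegral_wedge22_eq
    (triple.isHorizontalCrossing lt_20) hδ (by decide)

lemma ModelRight.eventually_IX3model_eq (h : ModelRight a v s1 s2 s3) (hδ : 0 < δ) :
    ∀ᶠ ε in 𝓝[>] (0 : ℝ), ∀ g, IsPolarDensity ε g →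
      IX3model a v δ g = 1 / 2 * (s1 * s3 * (∫ y, gnomonicDensity g y) ^ 2) := by
  obtain ⟨triple, lt_02, rfl, -, rfl⟩ := h
  have ⟨_, _, _, _, _, _, lt_21⟩ := triple
  exact (triple.isHorizontalCrossing lt_02).eventually_setIntegral_wedge22_eq
    (triple.isHorizontalCrossing lt_21) hδ (by decide)

end ModelTriplePoints

theorem statement13_general (s t : ℝ) :
    (∀ (a v a' v' a'' v'' : Fin 3 → E3) (r r' r'' δ δ' δ'' : ℝ), 0 < δ → 0 < δ' → 0 < δ'' →
      ModelLeft a v s t r → ModelLeft a' v' s (-t) r' → ModelLeft a'' v'' (-s) (-t) r'' →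
      ∀ᶠ ε in 𝓝[>] (0 : ℝ), ∀ g, IsPolarDensity ε g →
        IX1model a v δ g = -(IX1model a' v' δ' g) ∧
        IX1model a v δ g = IX1model a'' v'' δ'' g) ∧
    (∀ (a v a' v' a'' v'' : Fin 3 → E3) (r r' r'' δ δ' δ'' : ℝ), 0 < δ → 0 < δ' → 0 < δ'' →
      ModelRight a v s r t → ModelRight a' v' s r' (-t) → ModelRight a'' v'' (-s) r'' (-t) →
      ∀ᶠ ε in 𝓝[>] (0 : ℝ), ∀ g, IsPolarDensity ε g →
        IX3model a v δ g = -(IX3model a' v' δ' g) ∧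
        IX3model a v δ g = IX3model a'' v'' δ'' g) := by
  constructor
  · intro a v a' v' a'' v'' r r' r'' δ δ' δ'' hδ hδ' hδ'' h h' h''
    filter_upwards [h.eventually_IX1model_eq hδ, h'.eventually_IX1model_eq hδ',
      h''.eventually_IX1model_eq hδ''] with ε eq eq' eq'' g hg
    rw [eq g hg, eq' g hg, eq'' g hg]
    constructor <;> ring
  · intro a v a' v' a'' v'' r r' r'' δ δ' δ'' hδ hδ' hδ'' h h' h''
    filter_upwards [h.eventually_IX3model_eq hδ, h'.eventually_IX3model_eq hδ',
      h''.eventually_IX3model_eq hδ''] with ε eq eq' eq'' g hg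
    rw [eq g hg, eq' g hg, eq'' g hg]
    constructor <;> ring

/-- symmetries of the model integrals `I_X^{X′ₖ}`, `k = 1, 3`. For
all signs `s₁, s₂, s₃ ∈ {+1, -1}` and `k = 1, 3`, the model triple-point integrals
satisfy `I_X^{X′ₖ,s₁,s₂,s₃} = -I_X^{X′ₖ,s₁,-s₂,-s₃} = I_X^{X′ₖ,-s₁,-s₂,-s₃}` (the
integral `I_X^{X′₁}` being associated to models of type `←` and `I_X^{X′₃}` to models of
type `→`). -/
theorem statement13 (s1 s2 s3 : ℝ) (h1 : s1 = 1 ∨ s1 = -1) (h2 : s2 = 1 ∨ s2 = -1)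
    (h3 : s3 = 1 ∨ s3 = -1) :
    (∀ (a v a' v' a'' v'' : Fin 3 → E3) (δ δ' δ'' : ℝ), 0 < δ → 0 < δ' → 0 < δ'' →
      ModelLeft a v s1 s2 s3 → ModelLeft a' v' s1 (-s2) (-s3) →
      ModelLeft a'' v'' (-s1) (-s2) (-s3) →
      ∃ ε₀ > (0 : ℝ), ∀ ε : ℝ, 0 < ε → ε < ε₀ → ∀ g : E3 → ℝ, IsEtaForm ε g →
        IX1model a v δ g = -(IX1model a' v' δ' g) ∧
        IX1model a v δ g = IX1model a'' v'' δ'' g) ∧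
    (∀ (a v a' v' a'' v'' : Fin 3 → E3) (δ δ' δ'' : ℝ), 0 < δ → 0 < δ' → 0 < δ'' →
      ModelRight a v s1 s2 s3 → ModelRight a' v' s1 (-s2) (-s3) →
      ModelRight a'' v'' (-s1) (-s2) (-s3) →
      ∃ ε₀ > (0 : ℝ), ∀ ε : ℝ, 0 < ε → ε < ε₀ → ∀ g : E3 → ℝ, IsEtaForm ε g →
        IX3model a v δ g = -(IX3model a' v' δ' g) ∧
        IX3model a v δ g = IX3model a'' v'' δ'' g) := by
  exact ⟨fun _ _ _ _ _ _ _ _ _ hδ hδ' hδ'' h h' h'' => exists_pos_forall_isEtaForm_of_eventually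
      ((statement13_general s1 s2).1 _ _ _ _ _ _ _ _ _ _ _ _ hδ hδ' hδ'' h h' h''),
    fun _ _ _ _ _ _ _ _ _ hδ hδ' hδ'' h h' h'' => exists_pos_forall_isEtaForm_of_eventually
      ((statement13_general s1 s3).2 _ _ _ _ _ _ _ _ _ _ _ _ hδ hδ' hδ'' h h' h'')⟩
end
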